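/- arXiv:1409.2068 — 9 statements merged into one kernel-verified Lean document; each statement's English description precedes it below -/
import Mathlib

section
/- Let p₁, …, p_l ∈ E be distinct points such that no nonzero element of L is supported on {p₁, …, p_l}, let m ≤ l, and let σ be a permutation of the set {p₁, …, p_l}. Then L(σ(p₁), …, σ(p_m), σ(p_{m+1})˘, …, σ(p_l)˘) = { the element of ℓ²(E) whose value at x ∉ {p₁, …, p_l} is ∏_{i=1}^{m} ((x − σ(p_i))/(x − p_i))·h(x) and whose value on {p₁, …, p_l} is 0 : h ∈ L(p₁, …, p_m, p̆_{m+1}, …, p̆_l) }. -/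
/-!
The subspaces are compared by dividing elements of `L` by linear factors.

If `φ ∈ L` vanishes at `p`, then `φ / (x - p)`, with a suitable value at `p`, lies again in `L`
(`exists_div_mem`). Indeed, let `f = φ / (x - p)` off `p` and `f p = 0`. Then `f` and
`x f = φ + p f` are in `ℓ²`, so the commutator identity for `f` reads
`(x - p) Πf - φ = A b - B a` with `a = ∑ A f`, `b = ∑ B f`. At `x = p` this says that `(a, b)` is
proportional to the nonzero vector `(A p, B p)`, so the right side is a multiple of
`A B(p) - B A(p)`, which off `p` is `(x - p) Π(x, p)`. Hence `f` agrees off `p` with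
`Πf - c Πδ_p ∈ L`.

Consequently `φ ↦ (x - q) / (x - p) φ = φ + (p - q) φ / (x - p)` trades a zero at `p` for a zero at
`q` inside `L`. Trading the zeros one at a time turns an element of `L` vanishing on a finite set
`S` into one vanishing on any finite set `T` of the same size (`exists_trade_zeros`). Applied to
`S = {p₁, …, p_m}` and `T = {σ(p₁), …, σ(p_m)}`, in both orders, this gives the two inclusions.
-/

lemma memlp_two_of_le {ι : Type*} (f : lp (fun _ : ι => ℝ) 2) (g : ι → ℝ) (C : ℝ)
    (h : ∀ x, |g x| ≤ C * |f x|) : Memℓp g 2 := by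
  have hf := lp.memℓp f
  rw [memℓp_gen_iff (by norm_num)] at hf ⊢
  refine Summable.of_nonneg_of_le (fun x => by positivity) (fun x => ?_) (hf.mul_left (C ^ 2))
  have h2 : (|g x|) ^ 2 ≤ (C * |f x|) ^ 2 := pow_le_pow_left₀ (abs_nonneg _) (h x) 2
  simpa [mul_pow] using h2

lemma exists_gap {E : Set ℝ} (hEacc : ∀ x : ℝ, ¬ AccPt x (Filter.principal E)) (p : ℝ) :
    ∃ ε > 0, ∀ y ∈ E, y ≠ p → ε ≤ |y - p| := by
  have h := hEacc p
  rw [accPt_iff_nhds] at h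
  push Not at h
  obtain ⟨U, hU, h⟩ := h
  obtain ⟨ε, hε, hball⟩ := Metric.mem_nhds_iff.1 hU
  refine ⟨ε, hε, fun y hy hyp => ?_⟩
  by_contra! hlt
  exact hyp (h y ⟨hball (by simpa [Real.dist_eq] using hlt), hy⟩)

/-- Division of an element of `L` by `x - p`, for `p` one of its zeros, stays in `L`. The
hypothesis `hk` supplies, for each `p`, the column `Πδ_p` of the kernel. -/
lemma exists_div_mem {E : Set ℝ}
    (hEacc : ∀ x : ℝ, ¬ AccPt x (Filter.principal E))
    (L : Submodule ℝ (lp (fun _ : ↥E => ℝ) 2))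
    (Pj : lp (fun _ : ↥E => ℝ) 2 →L[ℝ] lp (fun _ : ↥E => ℝ) 2)
    (hmem : ∀ f, Pj f ∈ L) (hfix : ∀ f ∈ L, Pj f = f)
    (A B : ↥E → ℝ)
    (hAB0 : ∀ x : ↥E, ¬(A x = 0 ∧ B x = 0))
    (hk : ∀ p : ↥E, ∃ k ∈ L, ∀ x : ↥E, x ≠ p →
      k x = (A x * B p - A p * B x) / ((x : ℝ) - (p : ℝ)))
    (hcomm : ∀ ψ : lp (fun _ : ↥E => ℝ) 2,
      ∀ hmul : Memℓp (fun x : ↥E => (x : ℝ) * ψ x) 2, ∃ a b : ℝ,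
        ∀ x : ↥E, (x : ℝ) * (Pj ψ) x
            - (Pj (⟨fun y => (y : ℝ) * ψ y, hmul⟩ : lp (fun _ : ↥E => ℝ) 2)) x
          = A x * b - B x * a)
    (φ : lp (fun _ : ↥E => ℝ) 2) (hφ : φ ∈ L) (p : ↥E) (hp : φ p = 0) :
    ∃ ψ ∈ L, ∀ x : ↥E, ((x : ℝ) - p) * ψ x = φ x := by
  obtain ⟨ε, hε, hgap⟩ := exists_gap hEacc p
  -- At `p` the quotient below is `φ p / 0 = 0`, the value wanted there.
  have hfm : Memℓp (fun x : ↥E => φ x / ((x : ℝ) - p)) 2 := by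
    refine memlp_two_of_le φ _ ε⁻¹ fun x => ?_
    by_cases hx : x = p
    · subst hx; simp [hp]
    · have h1 := hgap x x.2 (fun h => hx (Subtype.ext h))
      rw [abs_div, div_eq_inv_mul]
      gcongr
  set f : lp (fun _ : ↥E => ℝ) 2 := ⟨fun x : ↥E => φ x / ((x : ℝ) - p), hfm⟩ with hf
  have hfx : ∀ x : ↥E, ((x : ℝ) - p) * f x = φ x := by
    intro x
    change ((x : ℝ) - p) * (φ x / ((x : ℝ) - p)) = φ x
    by_cases hx : x = p
    · subst hx; simp [hp]
    · have : (x : ℝ) - p ≠ 0 := sub_ne_zero.2 fun h => hx (Subtype.ext h)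
      field_simp
  have hxf : (fun x : ↥E => (x : ℝ) * f x) = ⇑(φ + (p : ℝ) • f) := by
    funext x
    have := hfx x
    simp only [lp.coeFn_add, lp.coeFn_smul, Pi.add_apply, Pi.smul_apply, smul_eq_mul]
    linarith
  have hmul : Memℓp (fun x : ↥E => (x : ℝ) * f x) 2 := by
    rw [hxf]; exact lp.memℓp _
  obtain ⟨a, b, hab⟩ := hcomm f hmul
  have hPxf : Pj (⟨fun y => (y : ℝ) * f y, hmul⟩ : lp (fun _ : ↥E => ℝ) 2)
      = φ + (p : ℝ) • Pj f := by
    have : (⟨fun y => (y : ℝ) * f y, hmul⟩ : lp (fun _ : ↥E => ℝ) 2) = φ + (p : ℝ) • f :=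
      Subtype.ext hxf
    rw [this, map_add, map_smul, hfix φ hφ]
  have hab' : ∀ x : ↥E, ((x : ℝ) - p) * Pj f x - φ x = A x * b - B x * a := by
    intro x
    rw [← hab x, hPxf]
    simp only [lp.coeFn_add, lp.coeFn_smul, Pi.add_apply, Pi.smul_apply, smul_eq_mul]
    ring
  have hpp : A p * b = B p * a := by
    have := hab' p
    rw [hp] at this
    linarith
  obtain ⟨c, hca, hcb⟩ : ∃ c : ℝ, a = c * A p ∧ b = c * B p := by
    by_cases hA : A p = 0
    · have hB : B p ≠ 0 := fun h => hAB0 p ⟨hA, h⟩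
      refine ⟨b / B p, ?_, by field_simp⟩
      rw [hA, zero_mul] at hpp
      rw [hA, mul_zero]
      exact (mul_eq_zero.1 hpp.symm).resolve_left hB
    · refine ⟨a / A p, by field_simp, ?_⟩
      field_simp
      linarith
  obtain ⟨k, hkL, hkx⟩ := hk p
  refine ⟨Pj f - c • k, L.sub_mem (hmem f) (L.smul_mem c hkL), fun x => ?_⟩
  simp only [lp.coeFn_sub, lp.coeFn_smul, Pi.sub_apply, Pi.smul_apply, smul_eq_mul]
  by_cases hx : x = p
  · subst hx; simp [hp]
  · have hne : (x : ℝ) - p ≠ 0 := sub_ne_zero.2 fun h => hx (Subtype.ext h)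
    have h1 := hab' x
    rw [hca, hcb] at h1
    have h2 : ((x : ℝ) - p) * k x = A x * B p - A p * B x := by
      rw [hkx x hx]; field_simp
    linear_combination h1 - c * h2

/-- If zeros can be divided out inside `L`, they can be moved from a finite set `S` to a finite set
`T` of the same size, by induction on the size of `S \ T`. -/
lemma exists_trade_zeros {E : Set ℝ} (L : Submodule ℝ (lp (fun _ : ↥E => ℝ) 2))
    (hdiv : ∀ φ ∈ L, ∀ p : ↥E, φ p = 0 → ∃ ψ ∈ L, ∀ x : ↥E, ((x : ℝ) - p) * ψ x = φ x)
    [DecidableEq ↥E] (T : Finset ↥E) (n : ℕ) :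
    ∀ S : Finset ↥E, S.card = T.card → (S \ T).card = n →
      ∀ φ ∈ L, (∀ x ∈ S, φ x = 0) → ∃ ψ ∈ L, (∀ x ∈ T, ψ x = 0) ∧
        ∀ x, x ∉ S → x ∉ T →
          (∏ s ∈ S, ((x : ℝ) - s)) * ψ x = (∏ t ∈ T, ((x : ℝ) - t)) * φ x := by
  induction n with
  | zero =>
    intro S hc hn φ hφ hS
    have hST : S = T :=
      Finset.eq_of_subset_of_card_le (Finset.sdiff_eq_empty_iff_subset.1 (Finset.card_eq_zero.1 hn))
        hc.ge
    subst hST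
    exact ⟨φ, hφ, hS, fun _ _ _ => rfl⟩
  | succ n ih =>
    intro S hc hn φ hφ hS
    obtain ⟨p, hp⟩ : (S \ T).Nonempty := Finset.card_pos.1 (by omega)
    obtain ⟨q, hq⟩ : (T \ S).Nonempty :=
      Finset.card_pos.1 (by rw [← Finset.card_sdiff_comm hc]; omega)
    rw [Finset.mem_sdiff] at hp hq
    have hpq : p ≠ q := fun h => hp.2 (h ▸ hq.1)
    have hqe : q ∉ S.erase p := fun h => hq.2 (Finset.mem_of_mem_erase h)
    obtain ⟨f, hf, hfx⟩ := hdiv φ hφ p (hS p hp.1)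
    set φ' := φ + ((p : ℝ) - q) • f with hφ'
    have hφx : ∀ x : ↥E, ((x : ℝ) - p) * φ' x = ((x : ℝ) - q) * φ x := by
      intro x
      simp only [hφ', lp.coeFn_add, lp.coeFn_smul, Pi.add_apply, Pi.smul_apply, smul_eq_mul]
      linear_combination ((p : ℝ) - q) * hfx x
    have hzero : ∀ x ∈ insert q (S.erase p), φ' x = 0 := by
      intro x hx
      have hxp : x ≠ p := by
        rintro rfl
        simp [hpq] at hx
      have hne : (x : ℝ) - p ≠ 0 := sub_ne_zero.2 fun h => hxp (Subtype.ext h)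
      refine (mul_eq_zero.1 ((hφx x).trans ?_)).resolve_left hne
      rcases Finset.mem_insert.1 hx with rfl | hx
      · simp
      · rw [hS x (Finset.mem_of_mem_erase hx), mul_zero]
    obtain ⟨ψ, hψ, hψT, hψx⟩ := ih (insert q (S.erase p))
      (by
        rw [Finset.card_insert_of_notMem hqe, Finset.card_erase_of_mem hp.1, ← hc]
        have := Finset.card_pos.2 ⟨p, hp.1⟩
        omega)
      (by
        rw [Finset.insert_sdiff_of_mem _ hq.1, Finset.erase_sdiff_comm,
          Finset.card_erase_of_mem (Finset.mem_sdiff.2 hp), hn]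
        rfl)
      φ' (L.add_mem hφ (L.smul_mem _ hf)) hzero
    refine ⟨ψ, hψ, hψT, fun x hxS hxT => ?_⟩
    have hxq : x ≠ q := fun h => hxT (h ▸ hq.1)
    have hne : (x : ℝ) - q ≠ 0 := sub_ne_zero.2 fun h => hxq (Subtype.ext h)
    have h1 := hψx x (by
      simp only [Finset.mem_insert, Finset.mem_erase, not_or, not_and]
      exact ⟨hxq, fun _ => hxS⟩) hxT
    rw [Finset.prod_insert hqe] at h1
    have h2 := hφx x
    rw [← Finset.mul_prod_erase S _ hp.1]
    refine mul_left_cancel₀ hne ?_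
    linear_combination ((x : ℝ) - p) * h1 + (∏ t ∈ T, ((x : ℝ) - t)) * h2

/-- The form of `exists_trade_zeros` used below: the zeros `r i` are replaced by the zeros `s i`,
where `i` ranges over the indices below `m`. -/
lemma exists_trade_zeros_fin {E : Set ℝ} (L : Submodule ℝ (lp (fun _ : ↥E => ℝ) 2))
    (hdiv : ∀ φ ∈ L, ∀ p : ↥E, φ p = 0 → ∃ ψ ∈ L, ∀ x : ↥E, ((x : ℝ) - p) * ψ x = φ x)
    {l m : ℕ} (r s : Fin l → ↥E) (hr : Function.Injective r) (hs : Function.Injective s)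
    (φ : lp (fun _ : ↥E => ℝ) 2) (hφ : φ ∈ L) (h0 : ∀ i : Fin l, (i : ℕ) < m → φ (r i) = 0) :
    ∃ ψ ∈ L, (∀ i : Fin l, (i : ℕ) < m → ψ (s i) = 0) ∧
      ∀ x : ↥E, (∀ i, x ≠ r i) → (∀ i, x ≠ s i) →
        ψ x = (∏ i : Fin l, if (i : ℕ) < m then
          ((x : ℝ) - (s i : ℝ)) / ((x : ℝ) - (r i : ℝ)) else 1) * φ x := by
  classical
  set I : Finset (Fin l) := Finset.univ.filter (fun i => (i : ℕ) < m) with hI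
  obtain ⟨ψ, hψ, hT, hx⟩ := exists_trade_zeros L hdiv (I.image s) _ (I.image r)
    (by rw [Finset.card_image_of_injective _ hr, Finset.card_image_of_injective _ hs]) rfl φ hφ
    (by
      intro x hx
      obtain ⟨i, hi, rfl⟩ := Finset.mem_image.1 hx
      exact h0 i (by simpa [hI] using hi))
  refine ⟨ψ, hψ, fun i hi => hT _ (Finset.mem_image_of_mem _ (by simpa [hI] using hi)),
    fun x hxr hxs => ?_⟩
  have h1 := hx x
    (fun h => by obtain ⟨i, -, hi⟩ := Finset.mem_image.1 h; exact hxr i hi.symm)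
    (fun h => by obtain ⟨i, -, hi⟩ := Finset.mem_image.1 h; exact hxs i hi.symm)
  rw [Finset.prod_image hr.injOn, Finset.prod_image hs.injOn] at h1
  rw [← Finset.prod_filter, ← hI, Finset.prod_div_distrib]
  have hne : ∏ i ∈ I, ((x : ℝ) - (r i : ℝ)) ≠ 0 :=
    Finset.prod_ne_zero_iff.2 fun i _ => sub_ne_zero.2 fun h => hxr i (Subtype.ext h)
  rw [div_mul_eq_mul_div, eq_div_iff hne, mul_comm, h1]

open scoped RealInnerProductSpace in
/-- (Discrete case.) For distinct points `p₁, …, p_l ∈ E` carrying no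
nonzero function of `L`, `m ≤ l` and a permutation `σ` of `{p₁, …, p_l}`,
`L(σ(p₁), …, σ(p_m), σ(p_{m+1})˘, …, σ(p_l)˘) =
 χ_{E∖{p₁,…,p_l}} ∏_{i=1}^m ((x-σ(p_i))/(x-p_i)) · L(p₁, …, p_m, p̆_{m+1}, …, p̆_l)`. -/
theorem discrete_palm_subspace_permutation
    (E : Set ℝ) (hEc : E.Countable)
    (hEacc : ∀ x : ℝ, ¬ AccPt x (Filter.principal E))
    (L : Submodule ℝ (lp (fun _ : ↥E => ℝ) 2))
    (hL : IsClosed (L : Set (lp (fun _ : ↥E => ℝ) 2)))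
    (Pj : lp (fun _ : ↥E => ℝ) 2 →L[ℝ] lp (fun _ : ↥E => ℝ) 2)
    (hPj : ∀ f, Pj f ∈ L ∧ ∀ h ∈ L, ⟪f - Pj f, h⟫ = 0)
    (A B : ↥E → ℝ)
    (hAB0 : ∀ x : ↥E, ¬(A x = 0 ∧ B x = 0))
    (hABindep : ∀ α β : ℝ, (∀ x : ↥E, α * A x + β * B x = 0) → α = 0 ∧ β = 0)
    (hker : ∀ x y : ↥E, x ≠ y →
      ⟪Pj (lp.single 2 y (1 : ℝ)), lp.single 2 x (1 : ℝ)⟫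
        = (A x * B y - A y * B x) / ((x : ℝ) - (y : ℝ)))
    (hcomm : ∀ ψ : lp (fun _ : ↥E => ℝ) 2,
      ∀ hmul : Memℓp (fun x : ↥E => (x : ℝ) * ψ x) 2,
        Summable (fun x : ↥E => |A x * ψ x|) ∧ Summable (fun x : ↥E => |B x * ψ x|) ∧
        ∀ x : ↥E, (x : ℝ) * (Pj ψ) x
            - (Pj (⟨fun y => (y : ℝ) * ψ y, hmul⟩ : lp (fun _ : ↥E => ℝ) 2)) x
          = A x * ∑' y : ↥E, B y * ψ y - B x * ∑' y : ↥E, A y * ψ y)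
    (l : ℕ) (p : Fin l → ↥E) (hpdist : Function.Injective p)
    (hsupp : ∀ φ ∈ L, (∀ x : ↥E, (∀ i : Fin l, x ≠ p i) → φ x = 0) → φ = 0)
    (m : ℕ) (hm : m ≤ l) (σ : Equiv.Perm (Fin l)) :
    {g : lp (fun _ : ↥E => ℝ) 2 | ∃ φ ∈ L,
        (∀ i : Fin l, (i : ℕ) < m → φ (p (σ i)) = 0) ∧
        (∀ i : Fin l, m ≤ (i : ℕ) → g (p (σ i)) = 0) ∧
        (∀ x : ↥E, (∀ i : Fin l, m ≤ (i : ℕ) → x ≠ p (σ i)) → g x = φ x)}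
      = {g : lp (fun _ : ↥E => ℝ) 2 |
          ∃ h ∈ {g' : lp (fun _ : ↥E => ℝ) 2 | ∃ φ ∈ L,
              (∀ i : Fin l, (i : ℕ) < m → φ (p i) = 0) ∧
              (∀ i : Fin l, m ≤ (i : ℕ) → g' (p i) = 0) ∧
              (∀ x : ↥E, (∀ i : Fin l, m ≤ (i : ℕ) → x ≠ p i) → g' x = φ x)},
            (∀ i : Fin l, g (p i) = 0) ∧
            ∀ x : ↥E, (∀ i : Fin l, x ≠ p i) →
              g x = (∏ i : Fin l, if (i : ℕ) < m then
                  ((x : ℝ) - (p (σ i) : ℝ)) / ((x : ℝ) - (p i : ℝ)) else 1) * h x} := by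
  classical
  have hfix : ∀ f ∈ L, Pj f = f := by
    intro f hf
    have h := (hPj f).2 (f - Pj f) (L.sub_mem hf (hPj f).1)
    exact (sub_eq_zero.1 (inner_self_eq_zero.1 h)).symm
  have hdiv : ∀ φ ∈ L, ∀ p : ↥E, φ p = 0 →
      ∃ ψ ∈ L, ∀ x : ↥E, ((x : ℝ) - p) * ψ x = φ x := by
    intro φ hφ p hp
    refine exists_div_mem hEacc L Pj (fun f => (hPj f).1) hfix A B hAB0 (fun p => ?_)
      (fun ψ hmul => ⟨_, _, (hcomm ψ hmul).2.2⟩) φ hφ p hp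
    refine ⟨_, (hPj (lp.single 2 p (1 : ℝ))).1, fun x hx => ?_⟩
    rw [← hker x p hx, lp.inner_single_right]
    simp
  have hpσ : Function.Injective (fun i => p (σ i)) := hpdist.comp σ.injective
  ext g
  simp only [Set.mem_ofPred_eq]
  constructor
  · rintro ⟨φ, hφ, h0, hg0, hgx⟩
    obtain ⟨ψ, hψ, hψ0, hψx⟩ :=
      exists_trade_zeros_fin (m := m) L hdiv (fun i => p (σ i)) p hpσ hpdist φ hφ h0
    -- `h` is `ψ` with the coordinates `p i`, `m ≤ i`, cut.
    have hmem : Memℓp (fun x : ↥E => if ∃ i : Fin l, m ≤ (i : ℕ) ∧ x = p i then 0 else ψ x) 2 := by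
      refine memlp_two_of_le ψ _ 1 fun x => ?_
      split_ifs <;> simp
    have hcut : ∀ x : ↥E, (∀ i : Fin l, m ≤ (i : ℕ) → x ≠ p i) →
        (if ∃ i : Fin l, m ≤ (i : ℕ) ∧ x = p i then 0 else ψ x) = ψ x := by
      intro x hx
      rw [if_neg]
      rintro ⟨i, hi, h⟩
      exact hx i hi h
    refine ⟨⟨_, hmem⟩, ⟨ψ, hψ, hψ0, fun i hi => if_pos ⟨i, hi, rfl⟩, hcut⟩, fun i => ?_,
      fun x hx => ?_⟩
    · obtain ⟨j, rfl⟩ := σ.surjective i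
      by_cases hj : m ≤ (j : ℕ)
      · exact hg0 j hj
      · rw [hgx _ fun i hi h => hj (by rw [σ.injective (hpdist h)]; exact hi)]
        exact h0 j (not_le.1 hj)
    · have hne : ∀ i, (x : ℝ) - p i ≠ 0 := fun i => sub_ne_zero.2 fun h => hx i (Subtype.ext h)
      change g x = _ * (if ∃ i : Fin l, m ≤ (i : ℕ) ∧ x = p i then 0 else ψ x)
      rw [hcut x fun i _ => hx i, hψx x (fun i => hx (σ i)) hx, hgx x fun i _ => hx (σ i),
        ← mul_assoc, ← Finset.prod_mul_distrib]
      rw [Finset.prod_eq_one, one_mul]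
      intro i _
      split_ifs
      · have h1 := hne i
        have h2 := hne (σ i)
        field_simp
      · simp
  · rintro ⟨h, ⟨φ, hφ, h0, -, hhx⟩, hg0, hgx⟩
    obtain ⟨ψ, hψ, hψ0, hψx⟩ :=
      exists_trade_zeros_fin (m := m) L hdiv p (fun i => p (σ i)) hpdist hpσ φ hφ h0
    refine ⟨ψ, hψ, hψ0, fun i _ => hg0 (σ i), fun x hx => ?_⟩
    by_cases hxp : ∀ i, x ≠ p i
    · rw [hgx x hxp, hψx x hxp fun i => hxp (σ i), hhx x fun i _ => hxp i]
    · push Not at hxp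
      obtain ⟨i, rfl⟩ := hxp
      obtain ⟨j, rfl⟩ := σ.surjective i
      have hj : (j : ℕ) < m := not_le.1 fun hj => hx j hj rfl
      rw [hg0, hψ0 j hj]
end

section
/- Let p ∈ E and let φ ∈ L with φ(p) = 0. Then there exists ψ ∈ L such that ψ(x) = φ(x)/(x − p) for all x ∈ E with x ≠ p, the function x ↦ xψ(x) belongs to ℓ²(E), and Σ_{x∈E} A(x)ψ(x) = Σ_{x∈E} B(x)ψ(x) = 0. -/
/-!
Away from `p` the quotient `φ(x) / (x - p)` is prescribed, and it is square-summable because `p` is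
isolated in `E`; only the value at `p` is free. For any choice `ψ` of that value, `(x - p)ψ = φ`,
and since `Πφ = φ` the commutator identity reads
`(x - p)(Πψ)(x) - φ(x) = A(x) ΣBψ - B(x) ΣAψ`.
At `x = p` it shows that `(ΣAψ, ΣBψ)` is a multiple of the nonzero vector `(A(p), B(p))`. Changing
`ψ(p)` translates `(ΣAψ, ΣBψ)` along this vector, so one value of `ψ(p)` makes both sums vanish.
Then `Πψ = ψ` away from `p`, so `Πψ - ψ` is a multiple of `δ_p`, and it is orthogonal to `L`.
Were it nonzero, `Πδ_p = 0`, and the commutator identity at `δ_p` would give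
`A(x)B(p) - B(x)A(p) = 0` for all `x`, contradicting linear independence. Hence `Πψ = ψ`.
-/

/-- Dividing by `x - p` preserves square-summability when `p` is isolated in `E`. The value at `p`
is `0`, by the convention for division by zero. -/
lemma memℓp_div_sub (E : Set ℝ) (p : ↥E) (hp : ¬ AccPt (p : ℝ) (Filter.principal E))
    (φ : lp (fun _ : ↥E => ℝ) 2) :
    Memℓp (fun x : ↥E => φ x / ((x : ℝ) - (p : ℝ))) 2 := by
  obtain ⟨ε, hε, hsep⟩ : ∃ ε > 0, ∀ x : ↥E, x ≠ p → ε ≤ |(x : ℝ) - p| := by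
    rw [accPt_iff_nhds] at hp
    push Not at hp
    obtain ⟨U, hU, h⟩ := hp
    obtain ⟨ε, hε, hball⟩ := Metric.mem_nhds_iff.1 hU
    refine ⟨ε, hε, fun x hx => ?_⟩
    by_contra! hlt
    exact hx (Subtype.ext (h x ⟨hball (by simpa [Real.dist_eq] using hlt), x.2⟩))
  have hφ : Memℓp (fun x : ↥E => ε⁻¹ • φ x) 2 := (lp.memℓp φ).const_smul ε⁻¹
  rw [memℓp_gen_iff (by norm_num)] at hφ ⊢
  refine hφ.of_nonneg_of_le (fun x => by positivity) fun x => ?_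
  refine Real.rpow_le_rpow (norm_nonneg _) ?_ (by norm_num)
  rw [norm_smul, norm_div, div_eq_inv_mul, Real.norm_eq_abs (_ - _), norm_inv,
    Real.norm_of_nonneg hε.le]
  by_cases hx : x = p
  · subst hx
    simp only [sub_self, abs_zero, inv_zero, zero_mul]
    positivity
  · have := hsep x hx
    gcongr

open scoped RealInnerProductSpace in
/-- (Discrete case.) If `φ ∈ L` vanishes at `p ∈ E`, then
`φ(x) = (x - p) ψ(x)` for some `ψ ∈ L` with `xψ ∈ ℓ²(E)` and `ΣAψ = ΣBψ = 0`. -/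
theorem discrete_division_lemma
    (E : Set ℝ) (hEc : E.Countable)
    (hEacc : ∀ x : ℝ, ¬ AccPt x (Filter.principal E))
    (L : Submodule ℝ (lp (fun _ : ↥E => ℝ) 2))
    (hL : IsClosed (L : Set (lp (fun _ : ↥E => ℝ) 2)))
    (Pj : lp (fun _ : ↥E => ℝ) 2 →L[ℝ] lp (fun _ : ↥E => ℝ) 2)
    (hPj : ∀ f, Pj f ∈ L ∧ ∀ h ∈ L, ⟪f - Pj f, h⟫ = 0)
    (A B : ↥E → ℝ)
    (hAB0 : ∀ x : ↥E, ¬(A x = 0 ∧ B x = 0))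
    (hABindep : ∀ α β : ℝ, (∀ x : ↥E, α * A x + β * B x = 0) → α = 0 ∧ β = 0)
    (hker : ∀ x y : ↥E, x ≠ y →
      ⟪Pj (lp.single 2 y (1 : ℝ)), lp.single 2 x (1 : ℝ)⟫
        = (A x * B y - A y * B x) / ((x : ℝ) - (y : ℝ)))
    (hcomm : ∀ ψ : lp (fun _ : ↥E => ℝ) 2,
      ∀ hmul : Memℓp (fun x : ↥E => (x : ℝ) * ψ x) 2,
        Summable (fun x : ↥E => |A x * ψ x|) ∧ Summable (fun x : ↥E => |B x * ψ x|) ∧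
        ∀ x : ↥E, (x : ℝ) * (Pj ψ) x
            - (Pj (⟨fun y => (y : ℝ) * ψ y, hmul⟩ : lp (fun _ : ↥E => ℝ) 2)) x
          = A x * ∑' y : ↥E, B y * ψ y - B x * ∑' y : ↥E, A y * ψ y)
    (p : ↥E) (φ : lp (fun _ : ↥E => ℝ) 2) (hφL : φ ∈ L) (hφp : φ p = 0) :
    ∃ ψ : lp (fun _ : ↥E => ℝ) 2, ψ ∈ L ∧
      (∀ x : ↥E, x ≠ p → ψ x = φ x / ((x : ℝ) - (p : ℝ))) ∧
      Memℓp (fun x : ↥E => (x : ℝ) * ψ x) 2 ∧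
      (∑' x : ↥E, A x * ψ x) = 0 ∧ (∑' x : ↥E, B x * ψ x) = 0 := by
  have hfix : Pj φ = φ := by
    have h := (hPj φ).2 (φ - Pj φ) (L.sub_mem hφL (hPj φ).1)
    exact (sub_eq_zero.1 (inner_self_eq_zero.1 h)).symm
  -- The commutator identity for any `ψ` with `(x - p)ψ = φ`.
  have key : ∀ ψ : lp (fun _ : ↥E => ℝ) 2, (∀ x : ↥E, ((x : ℝ) - p) * ψ x = φ x) →
      Memℓp (fun x : ↥E => (x : ℝ) * ψ x) 2 ∧
      Summable (fun x : ↥E => A x * ψ x) ∧ Summable (fun x : ↥E => B x * ψ x) ∧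
      ∀ x : ↥E, ((x : ℝ) - p) * (Pj ψ) x - φ x
        = A x * ∑' y : ↥E, B y * ψ y - B x * ∑' y : ↥E, A y * ψ y := by
    intro ψ hψ
    have heq : (fun x : ↥E => (x : ℝ) * ψ x) = ⇑(φ + (p : ℝ) • ψ) := by
      funext x
      simp only [lp.coeFn_add, lp.coeFn_smul, Pi.add_apply, Pi.smul_apply, smul_eq_mul, ← hψ x]
      ring
    have hmul : Memℓp (fun x : ↥E => (x : ℝ) * ψ x) 2 := heq ▸ lp.memℓp _
    obtain ⟨h1, h2, h3⟩ := hcomm ψ hmul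
    refine ⟨hmul, h1.of_abs, h2.of_abs, fun x => ?_⟩
    have hx := h3 x
    have hv : (⟨fun y => (y : ℝ) * ψ y, hmul⟩ : lp (fun _ : ↥E => ℝ) 2) = φ + (p : ℝ) • ψ :=
      Subtype.ext heq
    rw [hv, map_add, map_smul, hfix] at hx
    simp only [lp.coeFn_add, lp.coeFn_smul, Pi.add_apply, Pi.smul_apply, smul_eq_mul] at hx
    rw [← hx]
    ring
  let δ : lp (fun _ : ↥E => ℝ) 2 := lp.single 2 p (1 : ℝ)
  have hδp : δ p = 1 := by simp [δ]
  have hδ : ∀ x, x ≠ p → δ x = 0 := fun x hx => by simp [δ, hx]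
  have hsingle : ∀ F : ↥E → ℝ, HasSum (fun x => F x * δ x) (F p) := fun F => by
    have := hasSum_single (f := fun x => F x * δ x) p (fun x hx => by simp [hδ x hx])
    simpa [hδp] using this
  -- If `Πδ_p` vanished, the commutator identity at `δ_p` would make `A` and `B` dependent.
  have hPδ : Pj δ ≠ 0 := by
    intro h0
    have heq : (fun x : ↥E => (x : ℝ) * δ x) = ⇑((p : ℝ) • δ) := by
      funext x
      by_cases hx : x = p
      · subst hx; simp
      · simp [hδ x hx]
    have hmul : Memℓp (fun x : ↥E => (x : ℝ) * δ x) 2 := heq ▸ lp.memℓp _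
    have h3 := (hcomm δ hmul).2.2
    have hv : (⟨fun y => (y : ℝ) * δ y, hmul⟩ : lp (fun _ : ↥E => ℝ) 2) = (p : ℝ) • δ :=
      Subtype.ext heq
    rw [hv, map_smul, h0, (hsingle A).tsum_eq, (hsingle B).tsum_eq] at h3
    obtain ⟨hB, hA⟩ := hABindep (B p) (-A p) fun x => by
      have := h3 x
      simp at this
      linarith
    exact hAB0 p ⟨by linarith, hB⟩
  let ψ₀ : lp (fun _ : ↥E => ℝ) 2 := ⟨_, memℓp_div_sub E p (hEacc p) φ⟩
  have hψ₀ : ∀ x, ψ₀ x = φ x / ((x : ℝ) - p) := fun x => rfl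
  have hne : ∀ x : ↥E, x ≠ p → (x : ℝ) - p ≠ 0 := fun x hx =>
    sub_ne_zero.2 fun h => hx (Subtype.ext h)
  have hψ₀mul : ∀ x : ↥E, ((x : ℝ) - p) * ψ₀ x = φ x := fun x => by
    by_cases hx : x = p
    · subst hx; simp [hφp]
    · rw [hψ₀, mul_div_cancel₀ _ (hne x hx)]
  obtain ⟨-, hsA, hsB, hc₀⟩ := key ψ₀ hψ₀mul
  set a := ∑' y : ↥E, A y * ψ₀ y with ha
  set b := ∑' y : ↥E, B y * ψ₀ y with hb
  have hpar : A p * b = B p * a := by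
    have := hc₀ p
    simp [hφp] at this
    linarith
  have hpos : A p ^ 2 + B p ^ 2 ≠ 0 := fun h =>
    hAB0 p ⟨by nlinarith [sq_nonneg (A p), sq_nonneg (B p)],
      by nlinarith [sq_nonneg (A p), sq_nonneg (B p)]⟩
  -- `t` is the factor in `(a, b) = t (A p, B p)`, read off by projecting onto `(A p, B p)`.
  obtain ⟨t, hta, htb⟩ : ∃ t : ℝ, a = t * A p ∧ b = t * B p := by
    refine ⟨(a * A p + b * B p) / (A p ^ 2 + B p ^ 2), ?_, ?_⟩
    · field_simp
      linear_combination (-B p) * hpar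
    · field_simp
      linear_combination A p * hpar
  let ψ : lp (fun _ : ↥E => ℝ) 2 := ψ₀ - t • δ
  have hψ : ∀ x, ψ x = ψ₀ x - t * δ x := fun x => rfl
  have hψmul : ∀ x : ↥E, ((x : ℝ) - p) * ψ x = φ x := fun x => by
    rw [hψ, mul_sub, hψ₀mul]
    by_cases hx : x = p
    · subst hx; simp
    · simp [hδ x hx]
  obtain ⟨hmul, -, -, hc⟩ := key ψ hψmul
  have hA0 : ∑' x : ↥E, A x * ψ x = 0 := by
    have h := hsA.hasSum.sub ((hsingle A).mul_left t)
    rw [← ha, hta, sub_self] at h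
    rw [← h.tsum_eq]
    exact tsum_congr fun x => by rw [hψ]; ring
  have hB0 : ∑' x : ↥E, B x * ψ x = 0 := by
    have h := hsB.hasSum.sub ((hsingle B).mul_left t)
    rw [← hb, htb, sub_self] at h
    rw [← h.tsum_eq]
    exact tsum_congr fun x => by rw [hψ]; ring
  refine ⟨ψ, ?_, fun x hx => by rw [hψ, hδ x hx, hψ₀]; ring, hmul, hA0, hB0⟩
  have hoff : ∀ x, x ≠ p → ψ x = Pj ψ x := fun x hx => by
    have h := hc x
    rw [hA0, hB0, ← hψmul x] at h
    exact mul_left_cancel₀ (hne x hx) (by linarith)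
  have hdiff : ψ - Pj ψ = (ψ p - Pj ψ p) • δ := by
    refine lp.ext (funext fun x => ?_)
    by_cases hx : x = p
    · subst hx; simp [hδp]
    · simp [hδ x hx, hoff x hx]
  have hk : ψ p - Pj ψ p = 0 := by
    by_contra hk
    -- `δ_p` is then orthogonal to `L`, in particular to `Πδ_p`.
    have h1 := (hPj ψ).2 (Pj δ) (hPj δ).1
    rw [hdiff, real_inner_smul_left] at h1
    have h2 := (mul_eq_zero.1 h1).resolve_left hk
    have h3 := (hPj δ).2 (Pj δ) (hPj δ).1
    rw [inner_sub_left, h2, zero_sub, neg_eq_zero] at h3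
    exact hPδ (inner_self_eq_zero.1 h3)
  rw [hk, zero_smul, sub_eq_zero] at hdiff
  rw [hdiff]
  exact (hPj ψ).1
end

section
/- Let A, B : ℝ → ℝ, let q ∈ ℝ with A(q)² + B(q)² > 0, set s := √(A(q)² + B(q)²), and let t be a nonzero real number. Define A^q(x) := (A(x)B(q) − A(q)B(x))/s and B^q(x) := (A(x)A(q) + B(x)B(q))/s − s·(A(x)B(q) − A(q)B(x))/(t·(x − q)). Then for all x, y ∈ ℝ such that x, y, q are pairwise distinct, (A(x)B(y) − A(y)B(x))/(x − y) − (1/t)·[(A(x)B(q) − A(q)B(x))/(x − q)]·[(A(q)B(y) − A(y)B(q))/(q − y)] = (A^q(x)B^q(y) − A^q(y)B^q(x))/(x − y). In other words, the reduced Palm kernel Π^q(x, y) = Π(x, y) − Π(x, q)Π(q, y)/t is again of integrable form. -/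
/-!
Write `u x = A x * B q - A q * B x` and `v x = A x * A q + B x * B q`. The map `(A, B) ↦ (u, v)`
has determinant `s ^ 2`, so `u x * v y - u y * v x = s ^ 2 * (A x * B y - A y * B x)`, and `u / s`,
`v / s` generate the same kernel as `A`, `B`. The correction `-s * u x / (t * (x - q))` in `Bq`
contributes `-(u x * u y / t) * (1 / (y - q) - 1 / (x - q))` to the numerator; after division by
`x - y` this is `-(u x / (x - q)) * (u y / (y - q)) / t`, the rank-one Palm term.
-/

/-- Integrable form of the reduced Palm kernel. -/
theorem palm_kernel_integrable_form
    (A B : ℝ → ℝ) (q : ℝ) (hq : 0 < A q ^ 2 + B q ^ 2)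
    (s : ℝ) (hs : s = Real.sqrt (A q ^ 2 + B q ^ 2))
    (t : ℝ) (ht : t ≠ 0)
    (Aq Bq : ℝ → ℝ)
    (hAq : ∀ x, Aq x = (A x * B q - A q * B x) / s)
    (hBq : ∀ x, Bq x = (A x * A q + B x * B q) / s
        - s * (A x * B q - A q * B x) / (t * (x - q))) :
    ∀ x y : ℝ, x ≠ y → x ≠ q → y ≠ q →
      (A x * B y - A y * B x) / (x - y)
        - (1 / t) * ((A x * B q - A q * B x) / (x - q))
            * ((A q * B y - A y * B q) / (q - y))
      = (Aq x * Bq y - Aq y * Bq x) / (x - y) := by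
  intro x y hxy hxq hyq
  have hs2 : s ^ 2 = A q ^ 2 + B q ^ 2 := by rw [hs, Real.sq_sqrt hq.le]
  have hs0 : s ≠ 0 := by rw [hs]; exact (Real.sqrt_pos.mpr hq).ne'
  have h1 : x - y ≠ 0 := sub_ne_zero.mpr hxy
  have h2 : x - q ≠ 0 := sub_ne_zero.mpr hxq
  have h3 : y - q ≠ 0 := sub_ne_zero.mpr hyq
  -- Pairing `(A, B)` with `(B q, -A q)` and `(A q, B q)` is a linear map of determinant `s ^ 2`.
  have hdet : (A x * B q - A q * B x) * (A y * A q + B y * B q)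
      - (A y * B q - A q * B y) * (A x * A q + B x * B q)
      = s ^ 2 * (A x * B y - A y * B x) := by rw [hs2]; ring
  have hnum : Aq x * Bq y - Aq y * Bq x = (A x * B y - A y * B x)
      - (x - y) * ((A x * B q - A q * B x) * (A y * B q - A q * B y))
        / (t * (x - q) * (y - q)) := by
    have hW : A x * B y - A y * B x = ((A x * B q - A q * B x) * (A y * A q + B y * B q)
      - (A y * B q - A q * B y) * (A x * A q + B x * B q)) / s ^ 2 := by
      rw [hdet]; field_simp
    rw [hW, hAq, hAq, hBq, hBq]
    generalize A x * B q - A q * B x = u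
    generalize A y * B q - A q * B y = v
    field_simp
    ring
  have hqy : (A q * B y - A y * B q) / (q - y) = (A y * B q - A q * B y) / (y - q) := by
    rw [← neg_div_neg_eq]; congr 1 <;> ring
  rw [hnum, hqy]
  field_simp
end

section
/- Let A, B : ℝ → ℝ, let q ∈ ℝ with A(q)² + B(q)² > 0, set s := √(A(q)² + B(q)²), and let t be a real number with t ≠ 1. Define A^q̆(x) := (A(x)B(q) − A(q)B(x))/s and B^q̆(x) := (A(x)A(q) + B(x)B(q))/s + s·(A(x)B(q) − A(q)B(x))/((1 − t)·(x − q)). Then for all x, y ∈ ℝ such that x, y, q are pairwise distinct, (A(x)B(y) − A(y)B(x))/(x − y) + (1/(1 − t))·[(A(x)B(q) − A(q)B(x))/(x − q)]·[(A(q)B(y) − A(y)B(q))/(q − y)] = (A^q̆(x)B^q̆(y) − A^q̆(y)B^q̆(x))/(x − y). In other words, the hole kernel Π^q̆(x, y) = Π(x, y) + Π(x, q)Π(q, y)/(1 − t) is again of integrable form off the point q. -/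
/-!
Write `D x = A x * B q - A q * B x` and `E x = A x * A q + B x * B q`. The pair `(D / s, E / s)` is
an orthogonal change (of determinant one) of the pair `(A, B)`, so
`D x * E y - D y * E x = s ^ 2 * (A x * B y - A y * B x)` reproduces the original kernel. The extra
term of `Bq` contributes `D x * D y / (1 - t) * (1 / (y - q) - 1 / (x - q))`, and the last factor is
`(x - y) / ((x - q) * (y - q))`, which gives the rank-one correction.
-/

/-- Integrable form of the hole kernel. -/
theorem hole_kernel_integrable_form
    (A B : ℝ → ℝ) (q : ℝ) (hq : 0 < A q ^ 2 + B q ^ 2)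
    (s : ℝ) (hs : s = Real.sqrt (A q ^ 2 + B q ^ 2))
    (t : ℝ) (ht : t ≠ 1)
    (Aq Bq : ℝ → ℝ)
    (hAq : ∀ x, Aq x = (A x * B q - A q * B x) / s)
    (hBq : ∀ x, Bq x = (A x * A q + B x * B q) / s
        + s * (A x * B q - A q * B x) / ((1 - t) * (x - q))) :
    ∀ x y : ℝ, x ≠ y → x ≠ q → y ≠ q →
      (A x * B y - A y * B x) / (x - y)
        + (1 / (1 - t)) * ((A x * B q - A q * B x) / (x - q))
            * ((A q * B y - A y * B q) / (q - y))
      = (Aq x * Bq y - Aq y * Bq x) / (x - y) := by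
  intro x y hxy hxq hyq
  have hs0 : s ≠ 0 := by
    rw [hs]
    exact (Real.sqrt_pos.mpr hq).ne'
  have hs2 : s ^ 2 = A q ^ 2 + B q ^ 2 := by
    rw [hs]
    exact Real.sq_sqrt hq.le
  have h1 : (1 - t) ≠ 0 := sub_ne_zero.mpr ht.symm
  have h2 : x - y ≠ 0 := sub_ne_zero.mpr hxy
  have h3 : x - q ≠ 0 := sub_ne_zero.mpr hxq
  have h4 : y - q ≠ 0 := sub_ne_zero.mpr hyq
  have rotation : (A x * B q - A q * B x) * (A y * A q + B y * B q)
      - (A y * B q - A q * B y) * (A x * A q + B x * B q)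
      = s ^ 2 * (A x * B y - A y * B x) := by
    rw [hs2]
    ring
  have key : Aq x * Bq y - Aq y * Bq x = (A x * B y - A y * B x)
      + (A x * B q - A q * B x) * (A y * B q - A q * B y) * (x - y)
        / ((1 - t) * (x - q) * (y - q)) := by
    have split : Aq x * Bq y - Aq y * Bq x
        = ((A x * B q - A q * B x) * (A y * A q + B y * B q)
            - (A y * B q - A q * B y) * (A x * A q + B x * B q)) / s ^ 2
          + (A x * B q - A q * B x) * (A y * B q - A q * B y) * (x - y)
            / ((1 - t) * (x - q) * (y - q)) := by
      rw [hAq, hAq, hBq, hBq]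
      field_simp
      ring
    rw [split, rotation, mul_div_cancel_left₀ _ (pow_ne_zero 2 hs0)]
  rw [key, ← neg_sub y q]
  field_simp
  ring
end

section
/- Let H be a complex Hilbert space, L a closed subspace of H, Π the orthogonal projection onto L, and G a bounded nonnegative self-adjoint operator on H such that the operator 1 + (G − 1)Π is invertible. Then the operator √G ∘ Π ∘ (1 + (G − 1)Π)⁻¹ ∘ √G is the orthogonal projection of H onto the closure of the subspace √G(L) = { √G φ : φ ∈ L }. -/
/-!
Given `f`, let `u = (1 + (G - 1)Π)⁻¹ √G f`. The defining equation `u + (G - 1)Π u = √G f`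
says that `√G (f - √G Π u) = u - Π u`, which is orthogonal to `L`. As `√G` is self-adjoint,
`f - √G Π u` is therefore orthogonal to `√G(L)`, hence to its closure, while `√G Π u` lies
in `√G(L)` itself.
-/

open scoped ComplexInnerProductSpace in
/-- `√G ∘ Π ∘ (1 + (G - 1)Π)⁻¹ ∘ √G` is the orthogonal projection
onto the closure of `√G(L)`. -/
theorem sqrtG_proj_inv_sqrtG_is_projection
    {H : Type*} [NormedAddCommGroup H] [InnerProductSpace ℂ H] [CompleteSpace H]
    (L : Submodule ℂ H) (hL : IsClosed (L : Set H))
    (Pj : H →L[ℂ] H)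
    (hPj : ∀ f : H, Pj f ∈ L ∧ ∀ h ∈ L, ⟪f - Pj f, h⟫ = 0)
    (G : H →L[ℂ] H) (hGsa : IsSelfAdjoint G)
    (hGpos : ∀ x : H, 0 ≤ (⟪G x, x⟫).re)
    -- `S` is the unique bounded nonnegative self-adjoint square root `√G` of `G`
    (S : H →L[ℂ] H) (hSsa : IsSelfAdjoint S)
    (hSpos : ∀ x : H, 0 ≤ (⟪S x, x⟫).re)
    (hSsq : S * S = G)
    (hinv : IsUnit (1 + (G - 1) * Pj)) :
    ∀ f : H,
      (S * Pj * ↑hinv.unit⁻¹ * S) f ∈ closure (S '' (L : Set H)) ∧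
      ∀ h ∈ closure (S '' (L : Set H)), ⟪f - (S * Pj * ↑hinv.unit⁻¹ * S) f, h⟫ = 0 := by
  intro f
  set u : H := (↑hinv.unit⁻¹ : H →L[ℂ] H) (S f) with hu
  have hval : (S * Pj * ↑hinv.unit⁻¹ * S) f = S (Pj u) := rfl
  have hker : S (f - S (Pj u)) = u - Pj u := by
    have h1 : (1 + (G - 1) * Pj) u = S f := by
      have h2 : (1 + (G - 1) * Pj) * (↑hinv.unit⁻¹ : H →L[ℂ] H) = 1 := hinv.mul_val_inv
      exact congrArg (fun T : H →L[ℂ] H => T (S f)) h2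
    have h3 : u + (S (S (Pj u)) - Pj u) = S f := by
      rw [← hSsq] at h1
      exact h1
    rw [map_sub, ← h3]
    abel
  rw [hval]
  refine ⟨subset_closure ⟨Pj u, (hPj u).1, rfl⟩, fun h hh => ?_⟩
  have hclosed : IsClosed {x : H | ⟪f - S (Pj u), x⟫ = 0} :=
    isClosed_eq (by fun_prop) continuous_const
  refine closure_minimal ?_ hclosed hh
  rintro _ ⟨φ, hφ, rfl⟩
  have hsym : ⟪S (f - S (Pj u)), φ⟫ = ⟪f - S (Pj u), S φ⟫ := hSsa.isSymmetric _ _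
  rw [Set.mem_setOf_eq, ← hsym, hker]
  exact (hPj u).2 φ hφ
end

section
/- Let H be a complex Hilbert space, L a closed subspace of H, Π the orthogonal projection onto L, and G a bounded nonnegative self-adjoint operator on H such that the operator 1 + (G − 1)Π is invertible. Then the subspace √G(L) = { √G φ : φ ∈ L } is closed in H. -/
/-!
On `L` the operator `1 + (G - 1)Π` acts as `G = S²`. Hence, if `U` is its inverse, `T = U S` is a
bounded left inverse of `S` on `L`: `T (S φ) = U (G φ) = φ`. Consequently
`S(L) = {y | T y ∈ L ∧ S (T y) = y}`, which is closed because `L` is closed and `S`, `T` are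
continuous.
-/

open scoped ComplexInnerProductSpace in
/-- If `1 + (G - 1)Π` is invertible, then the subspace `√G(L)` is closed. -/
theorem sqrtG_image_closed
    {H : Type*} [NormedAddCommGroup H] [InnerProductSpace ℂ H] [CompleteSpace H]
    (L : Submodule ℂ H) (hL : IsClosed (L : Set H))
    (Pj : H →L[ℂ] H)
    (hPj : ∀ f : H, Pj f ∈ L ∧ ∀ h ∈ L, ⟪f - Pj f, h⟫ = 0)
    (G : H →L[ℂ] H) (hGsa : IsSelfAdjoint G)
    (hGpos : ∀ x : H, 0 ≤ (⟪G x, x⟫).re)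
    -- `S` is the unique bounded nonnegative self-adjoint square root `√G` of `G`
    (S : H →L[ℂ] H) (hSsa : IsSelfAdjoint S)
    (hSpos : ∀ x : H, 0 ≤ (⟪S x, x⟫).re)
    (hSsq : S * S = G)
    (hinv : IsUnit (1 + (G - 1) * Pj)) :
    IsClosed (S '' (L : Set H)) := by
  have hfix : ∀ φ ∈ L, Pj φ = φ := by
    intro φ hφ
    have h := (hPj φ).2 (φ - Pj φ) (L.sub_mem hφ (hPj φ).1)
    exact (sub_eq_zero.mp (inner_self_eq_zero.mp h)).symm
  obtain ⟨u, hu⟩ := hinv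
  let T : H →L[ℂ] H := (↑u⁻¹ : H →L[ℂ] H) * S
  have hT : ∀ φ ∈ L, T (S φ) = φ := by
    intro φ hφ
    have h1 : (u : H →L[ℂ] H) φ = S (S φ) := by
      rw [hu, ← hSsq]
      simp [hfix φ hφ]
    have h2 : ((↑u⁻¹ : H →L[ℂ] H) * (u : H →L[ℂ] H)) φ = φ := by
      rw [Units.inv_mul]; rfl
    calc T (S φ) = (↑u⁻¹ : H →L[ℂ] H) (S (S φ)) := rfl
      _ = φ := by rw [← h1]; exact h2
  have hset : S '' (L : Set H) = T ⁻¹' (L : Set H) ∩ {y | S (T y) = y} := by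
    ext y
    constructor
    · rintro ⟨φ, hφ, rfl⟩
      simp only [Set.mem_inter_iff, Set.mem_preimage, Set.mem_setOf_eq, hT φ hφ]
      exact ⟨hφ, trivial⟩
    · rintro ⟨h1, h2⟩
      exact ⟨T y, h1, h2⟩
  rw [hset]
  exact (hL.preimage T.continuous).inter
    (isClosed_eq (S.continuous.comp T.continuous) continuous_id)
end

section
/- Let H be a complex Hilbert space, L a closed subspace of H, Π the orthogonal projection onto L, and G a bounded self-adjoint operator on H with G − 1 nonnegative (that is, ⟨(G − 1)x, x⟩ ≥ 0 for all x ∈ H). Then the operator 1 + (G − 1)Π is injective: if φ ∈ H satisfies φ + (G − 1)(Πφ) = 0, then φ = 0. -/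
/-!
Pairing `φ + (G - 1)Πφ = 0` with `Πφ`, and using `φ - Πφ ⊥ Πφ`, writes `0` as the sum of `‖Πφ‖²`
and `⟪(G - 1)Πφ, Πφ⟫`, whose real part is nonnegative. Hence `Πφ = 0`, and the equation reduces to
`φ = 0`.
-/

open scoped ComplexInnerProductSpace in
/-- If `G - 1 ≥ 0` then `1 + (G - 1)Π` is injective. -/
theorem one_add_sub_one_mul_proj_injective
    {H : Type*} [NormedAddCommGroup H] [InnerProductSpace ℂ H] [CompleteSpace H]
    (L : Submodule ℂ H) (hL : IsClosed (L : Set H))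
    (Pj : H →L[ℂ] H)
    (hPj : ∀ f : H, Pj f ∈ L ∧ ∀ h ∈ L, ⟪f - Pj f, h⟫ = 0)
    (G : H →L[ℂ] H) (hG : IsSelfAdjoint G)
    (hG1 : ∀ x : H, 0 ≤ (⟪(G - 1) x, x⟫).re) :
    ∀ φ : H, φ + (G - 1) (Pj φ) = 0 → φ = 0 := by
  intro φ hφ
  have horth : ⟪φ, Pj φ⟫ = ⟪Pj φ, Pj φ⟫ := by
    have h := (hPj φ).2 (Pj φ) (hPj φ).1
    rwa [inner_sub_left, sub_eq_zero] at h
  -- Pairing the equation with `Pj φ` gives `‖Pj φ‖² + ⟪(G - 1) (Pj φ), Pj φ⟫ = 0`.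
  have hpair : ⟪Pj φ, Pj φ⟫ + ⟪(G - 1) (Pj φ), Pj φ⟫ = 0 := by
    rw [← horth, ← inner_add_left, hφ, inner_zero_left]
  have hre := congrArg Complex.re hpair
  rw [Complex.add_re, Complex.zero_re] at hre
  have hnorm : (⟪Pj φ, Pj φ⟫).re = ‖Pj φ‖ ^ 2 := inner_self_eq_norm_sq (𝕜 := ℂ) (Pj φ)
  have hP : Pj φ = 0 := by
    have h := hG1 (Pj φ)
    have hsq : ‖Pj φ‖ ^ 2 = 0 := le_antisymm (by linarith) (sq_nonneg _)
    simpa using hsq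
  simpa [hP] using hφ
end

section
/- Let H be a complex Hilbert space, L a closed subspace of H, Π the orthogonal projection onto L, and G a bounded self-adjoint operator on H with G − 1 nonnegative (that is, ⟨(G − 1)x, x⟩ ≥ 0 for all x ∈ H). If the operator (G − 1) ∘ Π is compact, then 1 + (G − 1)Π is invertible, i.e. it is a bijection of H with bounded inverse. -/
/-!
Write `A = G - 1` and `Π = Pj`. Since `Π² = Π`, the operator is `1 + (AΠ)Π`, and `1 + ab` is
invertible as soon as `1 + ba` is (`isUnit_one_add_mul_swap`), so it suffices to invert
`1 + ΠAΠ`. Since `Π` is self-adjoint and `A ≥ 0`, the real part of `⟪(1 + ΠAΠ)x, x⟫` is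
`‖x‖² + re ⟪AΠx, Πx⟫ ≥ ‖x‖²`, and an operator bounded below in this sense is invertible
(Lax-Milgram).
-/

/-- The inverse of `1 + ab` is `1 - a(1 + ba)⁻¹b`. -/
theorem isUnit_one_add_mul_swap {R : Type*} [Ring R] {a b : R} (h : IsUnit (1 + b * a)) :
    IsUnit (1 + a * b) := by
  obtain ⟨u, hu⟩ := h
  have h1 : (1 + b * a) * (↑u⁻¹ : R) = 1 := by rw [← hu]; exact u.mul_inv
  have h2 : (↑u⁻¹ : R) * (1 + b * a) = 1 := by rw [← hu]; exact u.inv_mul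
  refine ⟨⟨1 + a * b, 1 - a * ↑u⁻¹ * b, ?_, ?_⟩, rfl⟩
  · calc (1 + a * b) * (1 - a * ↑u⁻¹ * b)
        = 1 + a * b - a * ((1 + b * a) * ↑u⁻¹) * b := by noncomm_ring
      _ = 1 := by rw [h1]; noncomm_ring
  · calc (1 - a * ↑u⁻¹ * b) * (1 + a * b)
        = 1 + a * b - a * (↑u⁻¹ * (1 + b * a)) * b := by noncomm_ring
      _ = 1 := by rw [h2]; noncomm_ring

open scoped ComplexInnerProductSpace in
/-- If `G - 1 ≥ 0` and `(G - 1)Π` is compact, then `1 + (G - 1)Π`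
is invertible (a bijection of `H` with bounded inverse, i.e. a unit of the ring of
bounded operators). -/
theorem one_add_sub_one_mul_proj_invertible
    {H : Type*} [NormedAddCommGroup H] [InnerProductSpace ℂ H] [CompleteSpace H]
    (L : Submodule ℂ H) (hL : IsClosed (L : Set H))
    (Pj : H →L[ℂ] H)
    (hPj : ∀ f : H, Pj f ∈ L ∧ ∀ h ∈ L, ⟪f - Pj f, h⟫ = 0)
    (G : H →L[ℂ] H) (hG : IsSelfAdjoint G)
    (hG1 : ∀ x : H, 0 ≤ (⟪(G - 1) x, x⟫).re)
    (hcpt : IsCompactOperator ⇑((G - 1) * Pj)) :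
    IsUnit (1 + (G - 1) * Pj) := by
  have hidem : Pj * Pj = Pj := by
    ext f
    -- `Pj f - Pj (Pj f)` lies in `L` and is orthogonal to `L`.
    have h := (hPj (Pj f)).2 (Pj f - Pj (Pj f)) (L.sub_mem (hPj f).1 (hPj _).1)
    exact (sub_eq_zero.mp (inner_self_eq_zero.mp h)).symm
  have hsymm : ∀ x y : H, ⟪Pj y, x⟫ = ⟪y, Pj x⟫ := by
    intro x y
    -- Both sides equal `⟪Pj y, Pj x⟫`.
    have h1 := (hPj y).2 (Pj x) (hPj x).1
    have h2 := inner_eq_zero_symm.mp ((hPj x).2 (Pj y) (hPj y).1)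
    rw [inner_sub_left, sub_eq_zero] at h1
    rw [inner_sub_right, sub_eq_zero] at h2
    rw [h2, h1]
  have hunit : IsUnit (1 + Pj * ((G - 1) * Pj)) := by
    refine ContinuousLinearMap.isUnit_of_forall_le_norm_inner_map _ (c := 1) one_pos fun x => ?_
    refine le_trans ?_ (Complex.re_le_norm _)
    have hx : ⟪(1 + Pj * ((G - 1) * Pj)) x, x⟫ = ⟪x, x⟫ + ⟪(G - 1) (Pj x), Pj x⟫ := by
      rw [← hsymm, ← inner_add_left]
      rfl
    have hxx : (⟪x, x⟫).re = ‖x‖ ^ 2 := inner_self_eq_norm_sq (𝕜 := ℂ) x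
    rw [hx, Complex.add_re, hxx, NNReal.coe_one, mul_one]
    exact le_add_of_nonneg_right (hG1 (Pj x))
  have h := isUnit_one_add_mul_swap hunit
  rwa [mul_assoc, hidem] at h
end

section
/- Let E be a countable set, ℓ²(E) the real Hilbert space of square-summable functions on E with δ_e the indicator of e ∈ E, L a closed subspace of ℓ²(E), and Π the orthogonal projection onto L, with matrix Π(x, y) = ⟨Πδ_y, δ_x⟩. Let q ∈ E with Π(q, q) ≠ 1. Then the subspace χ_{E∖{q}}·L = { χ_{E∖{q}}·φ : φ ∈ L } is closed, and the orthogonal projection Π^q̆ onto it has matrix entries Π^q̆(x, y) = Π(x, y) + Π(x, q)Π(q, y)/(1 − Π(q, q)) for all x ≠ q and y ≠ q, and Π^q̆(x, q) = Π^q̆(q, y) = 0 for all x, y ∈ E. -/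
/-!
Write `e = δ_q`, `k = ⟪Π e, e⟫ ≠ 1` and let `C g = g - ⟪g, e⟫ e`, which on `ℓ²(E)` is
multiplication by the indicator of `E ∖ {q}`. For any `f`, the vector
`w = Π (C f) + (⟪Π (C f), e⟫ / (1 - k)) Π e` lies in `L`, and the coefficient is chosen so that
`⟪w, e⟫ = ⟪Π (C f), e⟫ / (1 - k)`; this makes `f - C w` orthogonal to `C L`
(`hole_orthogonal`). So `f ↦ C w` is an explicit, continuous orthogonal projection onto `C L`.
Its fixed-point set is `C L`, which is therefore closed, and since orthogonal projections are
unique, evaluating `C w` at `f = δ_y` gives the matrix entries. The argument takes place in an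
arbitrary real inner product space with a unit vector `e`.
-/

open scoped RealInnerProductSpace

section Abstract

variable {H : Type*} [NormedAddCommGroup H] [InnerProductSpace ℝ H]

/-- The component `g - ⟪g, e⟫ e` of `g` orthogonal to the vector `e`, for `e` of norm one. -/
noncomputable def cut (e g : H) : H := g - ⟪g, e⟫ • e

/-- For `f ∈ H`, the vector of `L` whose image under `cut e` is the orthogonal projection of `f`
onto the image of `L` under that map, when `T` is the orthogonal projection onto `L`. -/
noncomputable def holeVec (T : H →L[ℝ] H) (e f : H) : H :=
  T (cut e f) + (⟪T (cut e f), e⟫ / (1 - ⟪T e, e⟫)) • T e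

lemma hole_orthogonal (L : Submodule ℝ H) (T : H →L[ℝ] H)
    (hT : ∀ f, T f ∈ L ∧ ∀ h ∈ L, ⟪f - T f, h⟫ = 0) (e : H) (he : ⟪e, e⟫ = 1)
    (hk : ⟪T e, e⟫ ≠ 1) (f φ : H) (hφ : φ ∈ L) :
    ⟪f - cut e (holeVec T e f), cut e φ⟫ = 0 := by
  have h1 := (hT (cut e f)).2 φ hφ
  have h2 := (hT e).2 φ hφ
  have hk' : 1 - ⟪T e, e⟫ ≠ 0 := sub_ne_zero.mpr hk.symm
  set a := ⟪T (cut e f), e⟫ with ha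
  set k := ⟪T e, e⟫ with hkdef
  have hw : ⟪holeVec T e f, e⟫ = a / (1 - k) := by
    simp only [holeVec, inner_add_left, real_inner_smul_left, ← ha, ← hkdef]
    field_simp
    ring
  have hwφ : ⟪holeVec T e f, φ⟫ = ⟪T (cut e f), φ⟫ + a / (1 - k) * ⟪T e, φ⟫ := by
    simp only [holeVec, inner_add_left, real_inner_smul_left, ← ha, ← hkdef]
  rw [inner_sub_left] at h1 h2
  generalize holeVec T e f = w at *
  simp only [cut, inner_sub_left, inner_sub_right, real_inner_smul_left, real_inner_smul_right,
    he, hw, hwφ, real_inner_comm e φ] at *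
  linear_combination h1 + a / (1 - k) * h2

lemma holeVec_mem (L : Submodule ℝ H) (T : H →L[ℝ] H)
    (hT : ∀ f, T f ∈ L ∧ ∀ h ∈ L, ⟪f - T f, h⟫ = 0) (e f : H) : holeVec T e f ∈ L :=
  L.add_mem (hT _).1 (L.smul_mem _ (hT _).1)

/-- Uniqueness of the orthogonal projection onto the image of `L` under `cut e`. -/
lemma hole_unique (L : Submodule ℝ H) (T : H →L[ℝ] H)
    (hT : ∀ f, T f ∈ L ∧ ∀ h ∈ L, ⟪f - T f, h⟫ = 0) (e : H) (he : ⟪e, e⟫ = 1)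
    (hk : ⟪T e, e⟫ ≠ 1) (f ψ : H) (hψ : ψ ∈ L)
    (hf : ∀ φ ∈ L, ⟪f - cut e ψ, cut e φ⟫ = 0) :
    cut e ψ = cut e (holeVec T e f) := by
  have hw := holeVec_mem L T hT e f
  have hd : cut e ψ - cut e (holeVec T e f) = cut e (ψ - holeVec T e f) := by
    simp only [cut, inner_sub_left, sub_smul]
    abel
  have hm := L.sub_mem hψ hw
  have h1 := hf _ hm
  have h2 := hole_orthogonal L T hT e he hk f _ hm
  rw [← sub_eq_zero, ← inner_self_eq_zero (𝕜 := ℝ)]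
  nth_rewrite 2 [hd]
  rw [inner_sub_left] at h1 h2 ⊢
  linarith

lemma hole_isClosed (L : Submodule ℝ H) (T : H →L[ℝ] H)
    (hT : ∀ f, T f ∈ L ∧ ∀ h ∈ L, ⟪f - T f, h⟫ = 0) (e : H) (he : ⟪e, e⟫ = 1)
    (hk : ⟪T e, e⟫ ≠ 1) : IsClosed {g : H | ∃ φ ∈ L, g = cut e φ} := by
  have hfix : {g : H | ∃ φ ∈ L, g = cut e φ} = {g | g = cut e (holeVec T e g)} := by
    ext g
    constructor
    · rintro ⟨φ, hφ, rfl⟩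
      exact hole_unique L T hT e he hk _ φ hφ (by simp)
    · intro hg
      exact ⟨_, holeVec_mem L T hT e g, hg⟩
  rw [hfix]
  refine isClosed_eq continuous_id ?_
  unfold holeVec cut
  fun_prop

end Abstract

lemma inner_single_one {E : Type*} [DecidableEq E] (f : lp (fun _ : E => ℝ) 2) (x : E) :
    ⟪f, lp.single 2 x (1 : ℝ)⟫ = f x := by
  rw [lp.inner_single_right]
  simp

lemma single_one_apply {E : Type*} [DecidableEq E] (q x : E) :
    (lp.single 2 q (1 : ℝ) : lp (fun _ : E => ℝ) 2) x = if x = q then 1 else 0 := by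
  rw [lp.single_apply]
  simp [Pi.single_apply]

lemma cut_single_apply {E : Type*} [DecidableEq E] (q : E) (f : lp (fun _ : E => ℝ) 2) (x : E) :
    cut (lp.single 2 q (1 : ℝ)) f x = if x = q then 0 else f x := by
  rw [cut, inner_single_one, lp.coeFn_sub, lp.coeFn_smul, Pi.sub_apply, Pi.smul_apply,
    single_one_apply]
  split_ifs with h <;> simp [h]

open scoped RealInnerProductSpace in
/-- For a countable set `E`, a closed subspace `L ⊆ ℓ²(E)` with orthogonal
projection `Π` and `q ∈ E` with `Π(q,q) ≠ 1`, the subspace `χ_{E∖{q}}·L` is closed and the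
orthogonal projection onto it has the matrix `Π^q̆`. -/
theorem hole_projection_kernel
    {E : Type*} [Countable E] [DecidableEq E]
    (L : Submodule ℝ (lp (fun _ : E => ℝ) 2)) (hL : IsClosed (L : Set (lp (fun _ : E => ℝ) 2)))
    (Pj : lp (fun _ : E => ℝ) 2 →L[ℝ] lp (fun _ : E => ℝ) 2)
    (hPj : ∀ f, Pj f ∈ L ∧ ∀ h ∈ L, ⟪f - Pj f, h⟫ = 0)
    (q : E)
    (hq : ⟪Pj (lp.single 2 q (1 : ℝ)), lp.single 2 q (1 : ℝ)⟫ ≠ 1) :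
    IsClosed {g : lp (fun _ : E => ℝ) 2 |
        ∃ φ ∈ L, ∀ x : E, g x = if x = q then 0 else φ x} ∧
    ∀ P : lp (fun _ : E => ℝ) 2 →L[ℝ] lp (fun _ : E => ℝ) 2,
      (∀ f, P f ∈ {g : lp (fun _ : E => ℝ) 2 |
            ∃ φ ∈ L, ∀ x : E, g x = if x = q then 0 else φ x} ∧
          ∀ h ∈ {g : lp (fun _ : E => ℝ) 2 |
            ∃ φ ∈ L, ∀ x : E, g x = if x = q then 0 else φ x}, ⟪f - P f, h⟫ = 0) →
      (∀ x y : E, x ≠ q → y ≠ q →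
          ⟪P (lp.single 2 y (1 : ℝ)), lp.single 2 x (1 : ℝ)⟫
            = ⟪Pj (lp.single 2 y (1 : ℝ)), lp.single 2 x (1 : ℝ)⟫
              + ⟪Pj (lp.single 2 q (1 : ℝ)), lp.single 2 x (1 : ℝ)⟫
                * ⟪Pj (lp.single 2 y (1 : ℝ)), lp.single 2 q (1 : ℝ)⟫
                / (1 - ⟪Pj (lp.single 2 q (1 : ℝ)), lp.single 2 q (1 : ℝ)⟫)) ∧
      (∀ x : E, ⟪P (lp.single 2 q (1 : ℝ)), lp.single 2 x (1 : ℝ)⟫ = 0) ∧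
      (∀ y : E, ⟪P (lp.single 2 y (1 : ℝ)), lp.single 2 q (1 : ℝ)⟫ = 0) := by
  have hset : {g : lp (fun _ : E => ℝ) 2 | ∃ φ ∈ L, ∀ x : E, g x = if x = q then 0 else φ x}
      = {g | ∃ φ ∈ L, g = cut (lp.single 2 q (1 : ℝ)) φ} := by
    ext g
    refine exists_congr fun φ => and_congr_right fun _ => ⟨fun h => ?_, ?_⟩
    · ext x
      rw [h x, cut_single_apply]
    · rintro rfl x
      exact cut_single_apply q φ x
  have he : ⟪(lp.single 2 q (1 : ℝ) : lp (fun _ : E => ℝ) 2), lp.single 2 q (1 : ℝ)⟫ = 1 := by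
    rw [inner_single_one, single_one_apply, if_pos rfl]
  rw [hset]
  refine ⟨hole_isClosed L Pj hPj _ he hq, fun P hP => ?_⟩
  have hPeq : ∀ f, P f = cut (lp.single 2 q (1 : ℝ)) (holeVec Pj (lp.single 2 q (1 : ℝ)) f) := by
    intro f
    obtain ⟨⟨ψ, hψ, hPf⟩, horth⟩ := hP f
    rw [hPf] at horth ⊢
    exact hole_unique L Pj hPj _ he hq f ψ hψ fun φ hφ => horth _ ⟨φ, hφ, rfl⟩
  refine ⟨fun x y hx hy => ?_, fun x => ?_, fun y => ?_⟩
  · have hcy : cut (lp.single 2 q (1 : ℝ)) (lp.single 2 y (1 : ℝ))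
        = (lp.single 2 y (1 : ℝ) : lp (fun _ : E => ℝ) 2) := by
      rw [cut, inner_single_one, single_one_apply, if_neg (Ne.symm hy), zero_smul, sub_zero]
    rw [hPeq, inner_single_one, cut_single_apply, if_neg hx, ← inner_single_one, holeVec, hcy,
      inner_add_left, real_inner_smul_left]
    ring
  · have hcq : cut (lp.single 2 q (1 : ℝ)) (lp.single 2 q (1 : ℝ))
        = (0 : lp (fun _ : E => ℝ) 2) := by
      rw [cut, he, one_smul, sub_self]
    rw [hPeq, holeVec, hcq]
    simp [cut]
  · rw [hPeq, inner_single_one, cut_single_apply, if_pos rfl]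
end
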